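/- If λ₁, λ₂, λ₃ are roots of unity satisfying (λ₁ + λ₁*) + (λ₂ + λ₂*) + (λ₃ + λ₃*) + 2 = 0, then up to permutation and complex conjugation, (λ₁, λ₂, λ₃) equals (i, ω, ω), or (ω, β, β²), or (−1, λ, −λ) for some root of unity λ, where ω = e^{2πi/3} and β = e^{2πi/5}. -/

import Mathlib

open Complex

noncomputable def ω : ℂ := Complex.exp (2 * Real.pi * Complex.I / 3)
noncomputable def β : ℂ := Complex.exp (2 * Real.pi * Complex.I / 5)

def IsRootOfUnity (z : ℂ) : Prop := ∃ n : ℕ, 0 < n ∧ z ^ n = 1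

open Polynomial ArithmeticFunction in
theorem nextCoeff_cyclotomic_eq (n : ℕ) (hn : 0 < n) :
    (cyclotomic n ℚ).nextCoeff = -(moebius n : ℚ) := by
  have key := (sum_eq_iff_sum_mul_moebius_eq (R := ℚ)
    (f := fun n => (cyclotomic n ℚ).nextCoeff) (g := fun n => if n = 1 then -1 else 0)).mp (by
      intro m hm
      rw [← Polynomial.Monic.nextCoeff_prod _ _ (fun i _ => cyclotomic.monic i ℚ),
        prod_cyclotomic_eq_X_pow_sub_one hm]
      have hd : (X ^ m - 1 : ℚ[X]).natDegree = m := by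
        simpa using natDegree_X_pow_sub_C (R := ℚ) (n := m) (r := 1)
      rw [nextCoeff_of_natDegree_pos (by omega), hd, coeff_sub, coeff_X_pow, coeff_one]
      by_cases h : m = 1
      · simp [h]
      · have h1 : m - 1 ≠ m := by omega
        have h2 : m - 1 ≠ 0 := by omega
        simp [h, h1, h2]) n hn
  rw [← key, Finset.sum_eq_single (n, 1)]
  · simp
  · rintro ⟨a, b⟩ hab hne
    have : b ≠ 1 := by
      rintro rfl
      simp at hab
      simp [hab.1] at hne
    simp [this]
  · intro h
    simp at h
    omega

noncomputable def avgT (n : ℕ) : ℚ := (ArithmeticFunction.moebius n : ℚ) / (n.totient : ℚ)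

open Polynomial in
theorem normalizedTrace_root {K : Type*} [Field K] [Algebra ℚ K] [Algebra.IsIntegral ℚ K]
    {a : K} {n : ℕ} (hn : 0 < n) (h : IsPrimitiveRoot a n) :
    Algebra.normalizedTrace ℚ K a = avgT n := by
  have : CharZero K := algebraRat.charZero K
  have hm : minpoly ℚ a = cyclotomic n ℚ := by
    rw [cyclotomic_eq_minpoly_rat h hn]
    congr!
    exact Subsingleton.elim _ _
  rw [Algebra.normalizedTrace_minpoly, hm,
    nextCoeff_cyclotomic_eq n hn, natDegree_cyclotomic, avgT]
  simp [div_eq_inv_mul]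

theorem avgT_ge (n : ℕ) (hn : 0 < n) (h2 : n ≠ 2) (h3 : n ≠ 3) (h5 : n ≠ 5) :
    -(1/6) ≤ avgT n := by
  unfold avgT
  have hpos : (0 : ℚ) < n.totient := by exact_mod_cast Nat.totient_pos.mpr hn
  rcases ArithmeticFunction.moebius_eq_or n with h | h | h
  · rw [h]; norm_num
  · rw [h]
    have : (0 : ℚ) ≤ ((1 : ℤ) : ℚ) / n.totient := by positivity
    linarith
  · by_cases h6 : 6 ≤ n.totient
    · have : (6 : ℚ) ≤ n.totient := by exact_mod_cast h6
      rw [h, le_div_iff₀ hpos]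
      push_cast
      linarith
    · exfalso
      have hsq : Squarefree n := by
        rw [← ArithmeticFunction.moebius_ne_zero_iff_squarefree, h]; norm_num
      have hsub : n.primeFactors ⊆ {2, 3, 5} := by
        intro p hp
        have hpp := Nat.prime_of_mem_primeFactors hp
        have hdvd := Nat.totient_dvd_of_dvd (Nat.dvd_of_mem_primeFactors hp)
        rw [Nat.totient_prime hpp] at hdvd
        have := Nat.le_of_dvd (Nat.totient_pos.mpr hn) hdvd
        have hp6 : p ≤ 6 := by omega
        interval_cases p <;> first | (simp; done) | (revert hpp; decide)
      have hd : n ∣ 30 := by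
        rw [← Nat.prod_primeFactors_of_squarefree hsq]
        have := Finset.prod_dvd_prod_of_subset _ _ (fun p : ℕ => p) hsub
        simpa using this
      have hm : n ∈ Nat.divisors 30 := by simp [hd]
      have hdiv : Nat.divisors 30 = {1, 2, 3, 5, 6, 10, 15, 30} := by decide
      rw [hdiv] at hm
      simp only [Finset.mem_insert, Finset.mem_singleton] at hm
      have c6 : ArithmeticFunction.moebius 6 = 1 := by
        rw [show 6 = 2 * 3 by rfl, ArithmeticFunction.isMultiplicative_moebius.map_mul_of_coprime (by norm_num),
          ArithmeticFunction.moebius_apply_prime (by norm_num), ArithmeticFunction.moebius_apply_prime (by norm_num)]; rfl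
      have c10 : ArithmeticFunction.moebius 10 = 1 := by
        rw [show 10 = 2 * 5 by rfl, ArithmeticFunction.isMultiplicative_moebius.map_mul_of_coprime (by norm_num),
          ArithmeticFunction.moebius_apply_prime (by norm_num), ArithmeticFunction.moebius_apply_prime (by norm_num)]; rfl
      rcases hm with rfl | rfl | rfl | rfl | rfl | rfl | rfl | rfl
      · simp at h
      · exact h2 rfl
      · exact h3 rfl
      · exact h5 rfl
      · rw [c6] at h; norm_num at h
      · rw [c10] at h; norm_num at h
      · exact h6 (by decide)
      · exact h6 (by decide)

theorem avgT_prime {p : ℕ} (hp : p.Prime) : avgT p = -1 / (p - 1 : ℕ) := by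
  rw [avgT, ArithmeticFunction.moebius_apply_prime hp, Nat.totient_prime hp]; norm_num

theorem avgT_sum (l : Fin 3 → ℂ) (hl : ∀ i, IsRootOfUnity (l i))
    (hsum : l 0 + (l 0)⁻¹ + (l 1 + (l 1)⁻¹) + (l 2 + (l 2)⁻¹) + 2 = 0) :
    avgT (orderOf (l 0)) + avgT (orderOf (l 1)) + avgT (orderOf (l 2)) = -1 := by
  have hmem : ∀ i, l i ∈ algebraicClosure ℚ ℂ := by
    intro i
    obtain ⟨n, hn, h⟩ := hl i
    rw [mem_algebraicClosure_iff]
    exact (IsIntegral.of_pow hn (by rw [h]; exact isIntegral_one)).isAlgebraic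
  let a : Fin 3 → algebraicClosure ℚ ℂ := fun i => ⟨l i, hmem i⟩
  have hpos : ∀ i, 0 < orderOf (l i) := fun i => by
    obtain ⟨n, hn, h⟩ := hl i
    exact orderOf_pos_iff.mpr (isOfFinOrder_iff_pow_eq_one.mpr ⟨n, hn, h⟩)
  have hp : ∀ i, IsPrimitiveRoot (a i) (orderOf (l i)) := fun i =>
    IsPrimitiveRoot.of_map_of_injective (f := (algebraicClosure ℚ ℂ).val)
      (IsPrimitiveRoot.orderOf (l i)) (algebraicClosure ℚ ℂ).val.injective
  have hs : a 0 + (a 0)⁻¹ + (a 1 + (a 1)⁻¹) + (a 2 + (a 2)⁻¹) + (1 + 1) = 0 := by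
    apply Subtype.ext
    have e : ((1 : ℂ) + 1) = 2 := one_add_one_eq_two
    push_cast
    rw [e]
    exact hsum
  have hI : Algebra.IsIntegral ℚ (algebraicClosure ℚ ℂ) :=
    Algebra.isIntegral_def.mpr fun x =>
      ((algebraicClosure.isAlgebraic ℚ ℂ).isAlgebraic x).isIntegral
  have ht := congrArg (Algebra.normalizedTrace ℚ (algebraicClosure ℚ ℂ)) hs
  simp only [map_add, map_zero, normalizedTrace_root (hpos _) (hp _),
    normalizedTrace_root (hpos _) (hp _).inv,
    normalizedTrace_root one_pos (IsPrimitiveRoot.one)] at ht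
  have h1 : avgT 1 = 1 := by simp [avgT]
  rw [h1] at ht
  linarith

theorem eq_or_conj {z w : ℂ} (hz : z * (starRingEnd ℂ) z = 1) (hw : w * (starRingEnd ℂ) w = 1)
    (h : z + (starRingEnd ℂ) z = w + (starRingEnd ℂ) w) :
    ∃ c : Bool, (if c then (starRingEnd ℂ) z else z) = w := by
  have : (w - z) * (w - (starRingEnd ℂ) z) = 0 := by linear_combination hz - hw + (-w) * h
  rcases mul_eq_zero.mp this with h | h
  · exact ⟨false, by simpa using (sub_eq_zero.mp h).symm⟩
  · exact ⟨true, by simpa using (sub_eq_zero.mp h).symm⟩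

theorem perm_exists : ∀ i j k : Fin 3, i ≠ j → j ≠ k → i ≠ k →
    ∃ e : Equiv.Perm (Fin 3), e 0 = i ∧ e 1 = j ∧ e 2 = k := by decide

/-- Assemble the permutation and conjugation choices. -/
theorem assemble (l : Fin 3 → ℂ) (i j k : Fin 3) (hij : i ≠ j) (hjk : j ≠ k) (hik : i ≠ k)
    (hu : ∀ i, l i * (starRingEnd ℂ) (l i) = 1) (x y z : ℂ)
    (hx : x * (starRingEnd ℂ) x = 1) (hy : y * (starRingEnd ℂ) y = 1)
    (hz : z * (starRingEnd ℂ) z = 1)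
    (h1 : l i + (starRingEnd ℂ) (l i) = x + (starRingEnd ℂ) x)
    (h2 : l j + (starRingEnd ℂ) (l j) = y + (starRingEnd ℂ) y)
    (h3 : l k + (starRingEnd ℂ) (l k) = z + (starRingEnd ℂ) z) :
    ∃ (e : Equiv.Perm (Fin 3)) (c : Fin 3 → Bool),
      (fun i => if c i then (starRingEnd ℂ) (l (e i)) else l (e i)) = ![x, y, z] := by
  obtain ⟨e, e0, e1, e2⟩ := perm_exists i j k hij hjk hik
  obtain ⟨c0, hc0⟩ := eq_or_conj (hu i) hx h1
  obtain ⟨c1, hc1⟩ := eq_or_conj (hu j) hy h2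
  obtain ⟨c2, hc2⟩ := eq_or_conj (hu k) hz h3
  refine ⟨e, ![c0, c1, c2], ?_⟩
  funext m
  fin_cases m
  · simpa [e0] using hc0
  · simpa [e1] using hc1
  · simpa [e2] using hc2

theorem conj_eq_inv {z : ℂ} {n : ℕ} (hn : 0 < n) (h : z ^ n = 1) :
    z * (starRingEnd ℂ) z = 1 := by
  have : ‖z‖ = 1 := Complex.norm_eq_one_of_pow_eq_one h hn.ne'
  rw [Complex.mul_conj, Complex.normSq_eq_norm_sq, this]; norm_num

theorem order_three {z : ℂ} (h : orderOf z = 3) : z + (starRingEnd ℂ) z = -1 := by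
  have h3 : z ^ 3 = 1 := h ▸ pow_orderOf_eq_one z
  have hu := conj_eq_inv (by norm_num) h3
  have h1 : z - 1 ≠ 0 := by
    intro h1
    rw [sub_eq_zero.mp h1] at h; simp at h
  have h4 : z ^ 2 + z + 1 = 0 := by
    apply (mul_eq_zero.mp (show (z - 1) * (z ^ 2 + z + 1) = 0 by linear_combination h3)).resolve_left h1
  have hz : z ≠ 0 := by rintro rfl; simp at h3
  apply mul_left_cancel₀ hz
  linear_combination hu + h4

theorem order_five {z : ℂ} (h : orderOf z = 5) :
    (z + (starRingEnd ℂ) z) ^ 2 + (z + (starRingEnd ℂ) z) - 1 = 0 := by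
  have h3 : z ^ 5 = 1 := h ▸ pow_orderOf_eq_one z
  have hu := conj_eq_inv (by norm_num) h3
  have h1 : z - 1 ≠ 0 := by
    intro h1
    rw [sub_eq_zero.mp h1] at h; simp at h
  have h4 : z ^ 4 + z ^ 3 + z ^ 2 + z + 1 = 0 := by
    apply (mul_eq_zero.mp (show (z - 1) * (z ^ 4 + z ^ 3 + z ^ 2 + z + 1) = 0 by
      linear_combination h3)).resolve_left h1
  have hz : z ≠ 0 := by rintro rfl; simp at h3
  have hc : (starRingEnd ℂ) z = z⁻¹ := by
    field_simp
    linear_combination hu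
  rw [hc]
  field_simp
  linear_combination h4

theorem omega_order : orderOf ω = 3 := by
  have := (Complex.isPrimitiveRoot_exp 3 (by norm_num)).eq_orderOf
  rw [ω]; exact_mod_cast this.symm

theorem beta_order : orderOf β = 5 := by
  have := (Complex.isPrimitiveRoot_exp 5 (by norm_num)).eq_orderOf
  rw [β]; exact_mod_cast this.symm

theorem stmt0 (l : Fin 3 → ℂ) (hl : ∀ i, IsRootOfUnity (l i))
    (hsum : (∑ i, (l i + (starRingEnd ℂ) (l i))) + 2 = 0) :
    ∃ (e : Equiv.Perm (Fin 3)) (c : Fin 3 → Bool),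
      ((fun i => if c i then (starRingEnd ℂ) (l (e i)) else l (e i)) = ![Complex.I, ω, ω] ∨
       (fun i => if c i then (starRingEnd ℂ) (l (e i)) else l (e i)) = ![ω, β, β ^ 2] ∨
       ∃ μ : ℂ, IsRootOfUnity μ ∧
         (fun i => if c i then (starRingEnd ℂ) (l (e i)) else l (e i)) = ![(-1 : ℂ), μ, -μ]) := by
  have hu : ∀ i, l i * (starRingEnd ℂ) (l i) = 1 := fun i => by
    obtain ⟨n, hn, h⟩ := hl i
    exact conj_eq_inv hn h
  have hinv : ∀ i, (starRingEnd ℂ) (l i) = (l i)⁻¹ := fun i =>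
    eq_inv_of_mul_eq_one_right (hu i)
  have hpos : ∀ i, 0 < orderOf (l i) := fun i => by
    obtain ⟨n, hn, h⟩ := hl i
    exact orderOf_pos_iff.mpr (isOfFinOrder_iff_pow_eq_one.mpr ⟨n, hn, h⟩)
  have hT := avgT_sum l hl (by simpa [Fin.sum_univ_three, hinv] using hsum)
  have hωu := conj_eq_inv (z := ω) (n := 3) (by norm_num) (omega_order ▸ pow_orderOf_eq_one ω)
  have hβ5 : β ^ 5 = 1 := beta_order ▸ pow_orderOf_eq_one β
  have hβu := conj_eq_inv (z := β) (n := 5) (by norm_num) hβ5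
  have hβ2u := conj_eq_inv (z := β ^ 2) (n := 5) (by norm_num) (by
    rw [← pow_mul, mul_comm, pow_mul, hβ5, one_pow])
  have hω := order_three omega_order
  have hβ := order_five beta_order
  have hβ2 : β ^ 2 + (starRingEnd ℂ) (β ^ 2) = -1 - (β + (starRingEnd ℂ) β) := by
    rw [map_pow]
    linear_combination hβ - 2 * hβu
  have hsum3 : ∀ i j k : Fin 3, i ≠ j → j ≠ k → i ≠ k →
      l i + (starRingEnd ℂ) (l i) + (l j + (starRingEnd ℂ) (l j)) +
        (l k + (starRingEnd ℂ) (l k)) + 2 = 0 := by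
    intro i j k hij hjk hik
    obtain ⟨e, rfl, rfl, rfl⟩ := perm_exists i j k hij hjk hik
    rw [← Equiv.sum_comp e, Fin.sum_univ_three] at hsum
    exact hsum
  have hT3 : ∀ i j k : Fin 3, i ≠ j → j ≠ k → i ≠ k →
      avgT (orderOf (l i)) + avgT (orderOf (l j)) + avgT (orderOf (l k)) = -1 := by
    intro i j k hij hjk hik
    obtain ⟨e, rfl, rfl, rfl⟩ := perm_exists i j k hij hjk hik
    have := Equiv.sum_comp e (fun i => avgT (orderOf (l i)))
    rw [Fin.sum_univ_three, Fin.sum_univ_three] at this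
    linarith
  have v3 : avgT 3 = -1/2 := by rw [avgT_prime (by norm_num)]; norm_num
  have v5 : avgT 5 = -1/4 := by rw [avgT_prime (by norm_num)]; norm_num
  by_cases h2 : ∃ i, orderOf (l i) = 2
  · obtain ⟨i, hi⟩ := h2
    obtain ⟨j, k, hij, hjk, hik⟩ : ∃ j k : Fin 3, i ≠ j ∧ j ≠ k ∧ i ≠ k := by
      clear hi; revert i; decide
    have hm : l i = -1 := by
      have hp := pow_orderOf_eq_one (l i)
      rw [hi] at hp
      rcases (sq_eq_sq_iff_eq_or_eq_neg.mp (hp.trans (one_pow 2).symm)) with h | h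
      · rw [h] at hi; simp at hi
      · exact h
    have hs := hsum3 i j k hij hjk hik
    obtain ⟨e, c, h⟩ := assemble l i j k hij hjk hik hu (-1) (l j) (-(l j)) (by simp) (hu j)
      (by simpa using hu j) (by rw [hm]) rfl (by
        rw [hm] at hs
        simp only [map_neg, map_one] at hs ⊢
        linear_combination hs)
    exact ⟨e, c, Or.inr (Or.inr ⟨l j, hl j, h⟩)⟩
  push Not at h2
  -- two of order 3
  have two : ∀ i j k : Fin 3, i ≠ j → j ≠ k → i ≠ k → orderOf (l j) = 3 → orderOf (l k) = 3 →
      ∃ (e : Equiv.Perm (Fin 3)) (c : Fin 3 → Bool),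
      (fun i => if c i then (starRingEnd ℂ) (l (e i)) else l (e i)) = ![Complex.I, ω, ω] := by
    intro i j k hij hjk hik hj hk
    have hs := hsum3 i j k hij hjk hik
    have hj' := order_three hj
    have hk' := order_three hk
    exact assemble l i j k hij hjk hik hu Complex.I ω ω (by simp) hωu hωu
      (by simp only [Complex.conj_I]; linear_combination hs - hj' - hk')
      (by rw [hj', hω]) (by rw [hk', hω])
  have low : ∀ i, orderOf (l i) ≠ 3 → -1/4 ≤ avgT (orderOf (l i)) := by
    intro i hi
    by_cases h5 : orderOf (l i) = 5
    · rw [h5, v5]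
    · have := avgT_ge _ (hpos i) (h2 i) hi h5
      linarith
  have one : ∀ i j k : Fin 3, i ≠ j → j ≠ k → i ≠ k → orderOf (l i) = 3 →
      orderOf (l j) ≠ 3 → orderOf (l k) ≠ 3 →
      ∃ (e : Equiv.Perm (Fin 3)) (c : Fin 3 → Bool),
      (fun i => if c i then (starRingEnd ℂ) (l (e i)) else l (e i)) = ![ω, β, β ^ 2] := by
    intro i j k hij hjk hik hi hj hk
    have ht := hT3 i j k hij hjk hik
    rw [hi, v3] at ht
    have hj5 : orderOf (l j) = 5 := by
      by_contra h5
      have := avgT_ge _ (hpos j) (h2 j) hj h5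
      have := low k hk
      linarith
    have hs := hsum3 i j k hij hjk hik
    have hi' := order_three hi
    have hj' := order_five hj5
    have hfac : (l j + (starRingEnd ℂ) (l j) - (β + (starRingEnd ℂ) β)) *
        (l j + (starRingEnd ℂ) (l j) + 1 + (β + (starRingEnd ℂ) β)) = 0 := by
      linear_combination hj' - hβ
    rcases mul_eq_zero.mp hfac with h | h
    · exact assemble l i j k hij hjk hik hu ω β (β ^ 2) hωu hβu hβ2u (by rw [hi', hω])
        (by linear_combination h) (by rw [hβ2]; linear_combination hs - hi' - h)
    · exact assemble l i k j hik hjk.symm hij hu ω β (β ^ 2) hωu hβu hβ2u (by rw [hi', hω])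
        (by linear_combination hs - hi' - h) (by rw [hβ2]; linear_combination h)
  have d01 : (0 : Fin 3) ≠ 1 := by decide
  have d12 : (1 : Fin 3) ≠ 2 := by decide
  have d02 : (0 : Fin 3) ≠ 2 := by decide
  by_cases h0 : orderOf (l 0) = 3 <;> by_cases h1 : orderOf (l 1) = 3 <;>
    by_cases h3 : orderOf (l 2) = 3
  · obtain ⟨e, c, h⟩ := two 0 1 2 d01 d12 d02 h1 h3
    exact ⟨e, c, Or.inl h⟩
  · obtain ⟨e, c, h⟩ := two 2 0 1 d02.symm d01 d12.symm h0 h1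
    exact ⟨e, c, Or.inl h⟩
  · obtain ⟨e, c, h⟩ := two 1 0 2 d01.symm d02 d12 h0 h3
    exact ⟨e, c, Or.inl h⟩
  · obtain ⟨e, c, h⟩ := one 0 1 2 d01 d12 d02 h0 h1 h3
    exact ⟨e, c, Or.inr (Or.inl h)⟩
  · obtain ⟨e, c, h⟩ := two 0 1 2 d01 d12 d02 h1 h3
    exact ⟨e, c, Or.inl h⟩
  · obtain ⟨e, c, h⟩ := one 1 0 2 d01.symm d02 d12 h1 h0 h3
    exact ⟨e, c, Or.inr (Or.inl h)⟩
  · obtain ⟨e, c, h⟩ := one 2 0 1 d02.symm d01 d12.symm h3 h0 h1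
    exact ⟨e, c, Or.inr (Or.inl h)⟩
  · exfalso
    have := low 0 h0
    have := low 1 h1
    have := low 2 h3
    linarith
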